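/- Let λ > 0, let F₁,…,F_p : ℝⁿ → ℝ (ℝⁿ = ℝᵐ × ℝᵈ) be twice continuously differentiable with ‖∇F_j(z)‖ ≤ L and ‖∇²F_j(z)‖ ≤ M for all z and j, set φ_β = Σ_{j=1}^p β_j F_j, and fix points z¹,…,z^N and (z')¹,…,(z')^M in ℝⁿ. Define Ĵ(β) = (1/N) Σ_{i=1}^N φ_β(zⁱ) + (1/M) Σ_{i=1}^M φ_β^c((z')ⁱ). Then Ĵ is differentiable at β = 0 and ∂Ĵ/∂β_j |_{β=0} = (1/N) Σ_{i=1}^N F_j(zⁱ) − (1/M) Σ_{i=1}^M F_j((z')ⁱ). -/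

import Mathlib

/-!
The competitor `z = z'` gives `φ^c(z') ≤ -φ(z')`. Conversely, the cost dominates
`(κ/2)‖z - z'‖²` with `κ = min λ 1`, so if `φ` is `K`-Lipschitz then completing the square in
`(κ/2)t² - Kt` gives `φ^c(z') ≥ -φ(z') - K²/(2κ)`. The function `φ_β` is Lipschitz with constant
`O(‖β‖)`, hence `φ_β^c(z') = -φ_β(z') + O(‖β‖²)`: to first order at `β = 0`, the `c`-transform is
a change of sign.
-/

open scoped RealInnerProductSpace
open MeasureTheory

noncomputable section

/-- The product space `ℝᵐ × ℝᵈ` whose points are written `z = (y, x)`. -/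
abbrev Zsp (m d : ℕ) := EuclideanSpace ℝ (Fin m) × EuclideanSpace ℝ (Fin d)

/-- Weighted quadratic cost `c_λ(z,z') = (1/2)(λ‖y−y'‖² + ‖x−x'‖²)`. -/
noncomputable def cost (lam : ℝ) {m d : ℕ} (z z' : Zsp m d) : ℝ :=
  (lam * ‖z.1 - z'.1‖ ^ 2 + ‖z.2 - z'.2‖ ^ 2) / 2

/-- The `c`-transform `φ^c(z') = inf_z (c_λ(z,z') − φ(z))`. -/
noncomputable def ctrans (lam : ℝ) {m d : ℕ} (φ : Zsp m d → ℝ) (z' : Zsp m d) : ℝ :=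
  ⨅ z : Zsp m d, (cost lam z z' - φ z)

/-- Partial gradient in the `y` variable. -/
noncomputable def gradY {m d : ℕ} (F : Zsp m d → ℝ) (z : Zsp m d) :
    EuclideanSpace ℝ (Fin m) :=
  gradient (fun y => F (y, z.2)) z.1

/-- Partial gradient in the `x` variable. -/
noncomputable def gradX {m d : ℕ} (F : Zsp m d → ℝ) (z : Zsp m d) :
    EuclideanSpace ℝ (Fin d) :=
  gradient (fun x => F (z.1, x)) z.2

/-- Rescaled gradient `∇_λF(z) = (∇_yF(z)/λ, ∇_xF(z))`. -/
noncomputable def gradLam (lam : ℝ) {m d : ℕ} (F : Zsp m d → ℝ) (z : Zsp m d) : Zsp m d :=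
  (lam⁻¹ • gradY F z, gradX F z)

/-- `⟨∇F(z), ∇_λG(z)⟩ = ⟨∇_yF(z), ∇_yG(z)⟩/λ + ⟨∇_xF(z), ∇_xG(z)⟩`. -/
noncomputable def innerLam (lam : ℝ) {m d : ℕ} (F G : Zsp m d → ℝ) (z : Zsp m d) : ℝ :=
  ⟪gradY F z, gradY G z⟫ / lam + ⟪gradX F z, gradX G z⟫

open scoped NNReal

section CTransform

variable {m d : ℕ} {lam : ℝ}

lemma cost_self (z : Zsp m d) : cost lam z z = 0 := by
  simp [cost]

lemma min_mul_norm_sub_sq_div_two_le_cost (hlam : 0 ≤ lam) (z z' : Zsp m d) :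
    min lam 1 * ‖z - z'‖ ^ 2 / 2 ≤ cost lam z z' := by
  have hfst : min lam 1 * ‖z.1 - z'.1‖ ^ 2 ≤ lam * ‖z.1 - z'.1‖ ^ 2 := by
    gcongr
    exact min_le_left _ _
  have hsnd : min lam 1 * ‖z.2 - z'.2‖ ^ 2 ≤ ‖z.2 - z'.2‖ ^ 2 :=
    mul_le_of_le_one_left (sq_nonneg _) (min_le_right _ _)
  have hlam_fst : 0 ≤ lam * ‖z.1 - z'.1‖ ^ 2 := by positivity
  unfold cost
  rw [Prod.norm_def, Prod.fst_sub, Prod.snd_sub]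
  rcases max_choice ‖z.1 - z'.1‖ ‖z.2 - z'.2‖ with h | h <;> rw [h]
  · linarith [sq_nonneg ‖z.2 - z'.2‖]
  · linarith

lemma neg_sub_le_cost_sub (hlam : 0 < lam) {K : ℝ≥0} {φ : Zsp m d → ℝ}
    (hφ : LipschitzWith K φ) (z z' : Zsp m d) :
    -φ z' - K ^ 2 / (2 * min lam 1) ≤ cost lam z z' - φ z := by
  have hlip : φ z ≤ φ z' + K * ‖z - z'‖ := by
    simpa only [dist_eq_norm] using hφ.le_add_mul z z'
  have hsquare : 0 ≤ (min lam 1 * ‖z - z'‖ - K) ^ 2 / (2 * min lam 1) := by positivity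
  have hexpand : (min lam 1 * ‖z - z'‖ - K) ^ 2 / (2 * min lam 1)
      = min lam 1 * ‖z - z'‖ ^ 2 / 2 - K * ‖z - z'‖ + K ^ 2 / (2 * min lam 1) := by
    field_simp
    ring
  linarith [min_mul_norm_sub_sq_div_two_le_cost hlam.le z z']

lemma abs_ctrans_add_le (hlam : 0 < lam) {K : ℝ≥0} {φ : Zsp m d → ℝ}
    (hφ : LipschitzWith K φ) (z' : Zsp m d) :
    |ctrans lam φ z' + φ z'| ≤ K ^ 2 / (2 * min lam 1) := by
  have hlower (z : Zsp m d) := neg_sub_le_cost_sub hlam hφ z z'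
  have hle : -φ z' - K ^ 2 / (2 * min lam 1) ≤ ctrans lam φ z' := le_ciInf hlower
  have hge : ctrans lam φ z' ≤ cost lam z' z' - φ z' :=
    ciInf_le ⟨_, Set.forall_mem_range.2 hlower⟩ z'
  have hbound : 0 ≤ (K : ℝ) ^ 2 / (2 * min lam 1) := by positivity
  rw [cost_self] at hge
  exact abs_le.2 ⟨by linarith, by linarith⟩

variable {E : Type*} [NormedAddCommGroup E] [NormedSpace ℝ E]

lemma hasFDerivAt_ctrans_zero (hlam : 0 < lam) {φ : E → Zsp m d → ℝ} {C : ℝ≥0}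
    (hφ : ∀ β, LipschitzWith (C * ‖β‖₊) (φ β)) {z' : Zsp m d} {φ' : E →L[ℝ] ℝ}
    (hφ' : HasFDerivAt (fun β => φ β z') φ' 0) :
    HasFDerivAt (fun β => ctrans lam (φ β) z') (-φ') 0 := by
  have hquadratic : (fun β => ctrans lam (φ β) z' + φ β z') =O[nhds 0] fun β => ‖β - 0‖ ^ 2 := by
    refine .of_bound (C ^ 2 / (2 * min lam 1)) (.of_forall fun β => ?_)
    calc ‖ctrans lam (φ β) z' + φ β z'‖
        ≤ ((C * ‖β‖₊ : ℝ≥0) : ℝ) ^ 2 / (2 * min lam 1) := abs_ctrans_add_le hlam (hφ β) z'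
      _ = C ^ 2 / (2 * min lam 1) * ‖‖β - 0‖ ^ 2‖ := by
        rw [NNReal.coe_mul, coe_nnnorm, sub_zero, norm_pow, norm_norm]
        ring
  simpa using (hquadratic.hasFDerivAt one_lt_two).fun_sub hφ'

lemma hasFDerivAt_empirical_objective_zero (hlam : 0 < lam) {φ : E → Zsp m d → ℝ} {C : ℝ≥0}
    (hφ : ∀ β, LipschitzWith (C * ‖β‖₊) (φ β)) {φ' : Zsp m d → E →L[ℝ] ℝ}
    (hφ' : ∀ z, HasFDerivAt (fun β => φ β z) (φ' z) 0)
    {N M : ℕ} (zR : Fin N → Zsp m d) (zT : Fin M → Zsp m d) :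
    HasFDerivAt (fun β => (1 / N : ℝ) * ∑ i, φ β (zR i)
        + (1 / M : ℝ) * ∑ i, ctrans lam (φ β) (zT i))
      ((1 / N : ℝ) • ∑ i, φ' (zR i) - (1 / M : ℝ) • ∑ i, φ' (zT i)) 0 := by
  have hR := (HasFDerivAt.fun_sum (u := .univ) fun i _ => hφ' (zR i)).const_mul (1 / N : ℝ)
  have hT := (HasFDerivAt.fun_sum (u := .univ) fun i _ =>
    hasFDerivAt_ctrans_zero hlam hφ (hφ' (zT i))).const_mul (1 / M : ℝ)
  simpa only [Finset.sum_neg_distrib, smul_neg, ← sub_eq_add_neg] using hR.fun_add hT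

end CTransform

section LinearCombination

variable {ι : Type*} [Fintype ι]

lemma lipschitzWith_sum_mul {X : Type*} [PseudoMetricSpace X] {K : ι → ℝ≥0} {F : ι → X → ℝ}
    (hF : ∀ j, LipschitzWith (K j) (F j)) (β : EuclideanSpace ℝ ι) :
    LipschitzWith ((∑ j, K j) * ‖β‖₊) fun x => ∑ j, β j * F j x := by
  refine .of_dist_le_mul fun x y => ?_
  calc dist (∑ j, β j * F j x) (∑ j, β j * F j y)
      ≤ ∑ j, dist (β j * F j x) (β j * F j y) := dist_sum_sum_le _ _ _
    _ = ∑ j, ‖β j‖ * dist (F j x) (F j y) := by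
      simp only [← smul_eq_mul, dist_smul₀]
    _ ≤ ∑ j, ‖β‖ * (K j * dist x y) := by
      gcongr with j
      · exact PiLp.norm_apply_le β j
      · exact (hF j).dist_le_mul x y
    _ = ((∑ j, K j) * ‖β‖₊ : ℝ≥0) * dist x y := by
      rw [← Finset.mul_sum, ← Finset.sum_mul]
      push_cast
      ring

lemma hasGradientAt_sum_mul (v : ι → ℝ) (β : EuclideanSpace ℝ ι) :
    HasGradientAt (fun β : EuclideanSpace ℝ ι => ∑ j, β j * v j) (WithLp.toLp 2 v) β := by
  have h := (InnerProductSpace.toDual ℝ _ (WithLp.toLp 2 v)).hasFDerivAt (x := β)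
  refine (hasGradientAt_iff_hasFDerivAt.2 h).congr_of_eventuallyEq (.of_forall fun β => ?_)
  simp [PiLp.inner_apply]

end LinearCombination

theorem empirical_objective_gradient_general {ι : Type*} [Fintype ι] {m d N M : ℕ} {lam : ℝ}
    (hlam : 0 < lam) {K : ι → ℝ≥0} {F : ι → Zsp m d → ℝ} (hF : ∀ j, LipschitzWith (K j) (F j))
    (zR : Fin N → Zsp m d) (zT : Fin M → Zsp m d) :
    HasGradientAt (fun β : EuclideanSpace ℝ ι =>
        (1 / N : ℝ) * ∑ i, (∑ j, β j * F j (zR i))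
          + (1 / M : ℝ) * ∑ i, ctrans lam (fun z => ∑ j, β j * F j z) (zT i))
      (WithLp.toLp 2 fun j => (1 / N : ℝ) * ∑ i, F j (zR i) - (1 / M : ℝ) * ∑ i, F j (zT i)) 0 := by
  have hderiv := hasFDerivAt_empirical_objective_zero hlam
    (φ := fun (β : EuclideanSpace ℝ ι) z => ∑ j, β j * F j z) (lipschitzWith_sum_mul hF)
    (fun z => (hasGradientAt_sum_mul (F · z) 0).hasFDerivAt) zR zT
  refine hasGradientAt_iff_hasFDerivAt.2 (hderiv.congr_fderiv ?_)
  simp only [← map_sum, ← map_smul, ← map_sub]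
  congr 1
  ext j
  simp

/-- the empirical dual objective
`Ĵ(β) = (1/N) Σ_i φ_β(zⁱ) + (1/M) Σ_i φ_β^c((z')ⁱ)` is differentiable at `β = 0` with
`∂Ĵ/∂β_j |₀ = (1/N) Σ_i F_j(zⁱ) − (1/M) Σ_i F_j((z')ⁱ)`. -/
theorem empirical_objective_gradient
    (m d p N M : ℕ) (lam L Mb : ℝ) (hlam : 0 < lam)
    (F : Fin p → Zsp m d → ℝ)
    (hC2 : ∀ j, ContDiff ℝ 2 (F j))
    (hL : ∀ j z, ‖fderiv ℝ (F j) z‖ ≤ L)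
    (hMb : ∀ j z, ‖fderiv ℝ (fderiv ℝ (F j)) z‖ ≤ Mb)
    (zR : Fin N → Zsp m d) (zT : Fin M → Zsp m d) :
    DifferentiableAt ℝ (fun β : EuclideanSpace ℝ (Fin p) =>
        (1 / N : ℝ) * ∑ i, (∑ j, β j * F j (zR i))
          + (1 / M : ℝ) * ∑ i, ctrans lam (fun z => ∑ j, β j * F j z) (zT i)) 0 ∧
    ∀ j : Fin p,
      fderiv ℝ (fun β : EuclideanSpace ℝ (Fin p) =>
          (1 / N : ℝ) * ∑ i, (∑ j, β j * F j (zR i))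
            + (1 / M : ℝ) * ∑ i, ctrans lam (fun z => ∑ j, β j * F j z) (zT i)) 0
          (EuclideanSpace.single j 1)
        = (1 / N : ℝ) * ∑ i, F j (zR i) - (1 / M : ℝ) * ∑ i, F j (zT i) := by
  have h := empirical_objective_gradient_general hlam (fun j => lipschitzWith_of_nnnorm_fderiv_le
    ((hC2 j).differentiable two_ne_zero) fun z => NNReal.le_toNNReal_of_coe_le (hL j z)) zR zT
  exact ⟨h.differentiableAt, fun j => by
    rw [h.fderiv_apply, EuclideanSpace.inner_single_right, one_mul, conj_trivial]⟩
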